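/- Let d ≥ 2, m ≥ 1, D = Δ^d × ℝ_+^m ⊆ ℝ^{d+m}, I = {1,…,d}, J = {d+1,…,d+m}, and let c : ℝ^{d+m} → S^{d+m} be a symmetric-matrix-valued map each of whose entries is a polynomial of degree at most 2. Then the following two conditions are equivalent. (i) For every x ∈ D the matrix c(x) is positive semidefinite, c(x)e_j = 0 for every x ∈ D with x_j = 0 (for every j ∈ I ∪ J), and Σ_{j∈I} c_{ij}(x) = 0 for every i ∈ I and every x ∈ D. (ii) There exist real numbers γ_{ij} = γ_{ji} ≥ 0 (i, j ∈ I, i ≠ j), vectors θ_{(j)} ∈ ℝ^d and π_{(j)} ∈ ℝ_+^m with π_{(j)j} = 0 (j ∈ J, with π_{(j)} indexed by J), a vector φ ∈ ℝ^m with φ_j ≥ max_{i∈I} θ_{(j)i}^− for all j ∈ J (where t^− denotes the negative part), and a symmetric matrix α ∈ S^m such that α + Diag(Π^⊤ x_J) Diag(x_J)^{−1} is positive semidefinite for all x_J ∈ ℝ^m_{++} (Π being the m×m matrix whose columns are the π_{(j)}), and such that on D: c_{ii}(x) = Σ_{j∈I, j≠i} γ_{ij} x_i x_j for i ∈ I;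 c_{ij}(x) = −γ_{ij} x_i x_j for i, j ∈ I, i ≠ j; c_{ij}(x) = 0 for i ∈ I, j ∈ J; c_{jj}(x) = α_{jj} x_j² + x_j (φ_j + θ_{(j)}^⊤ x_I + π_{(j)}^⊤ x_J) for j ∈ J; and c_{ij}(x) = α_{ij} x_i x_j for i, j ∈ J, i ≠ j. -/

import Mathlib

open Matrix MvPolynomial Finset

/-!
On the hyperplane `∑ i ∈ I, x i = 1` every polynomial of degree at most two agrees with a quadratic
form, so `c` may be taken homogeneous; scaling and a limit then carry condition (i) from
`Δ^d × ℝ₊^m` to the whole orthant. There tangency makes the `(k, l)` entry vanish when `x k = 0` or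
`x l = 0`, and a quadratic form vanishing on a facet of the orthant is divisible by the
corresponding coordinate. Hence off-diagonal entries are `A k l * x k * x l` and diagonal ones
`x k * (A k k * x k + ∑ a, B k a * x a)`. Nonnegativity of the latter near the facet `x k = 0` gives
`B k a ≥ 0`, so one may take `θ` and `Π` from `B` and `φ = 0`. Vanishing row sums fix the diagonal
of the `I`-block; at `e_i + e_j` with `i ∈ I`, nonnegativity of the diagonal entry gives the sign of
`γ i j` when `j ∈ I`, while for `j ∈ J` that entry is zero, which kills the mixed entry. At
`x = (0, y)` the `J`-block is congruent, via `Diag(y)`, to `α + Diag(Πᵀ y) Diag(y)⁻¹`.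

Conversely, a matrix of the form (ii) is block diagonal. Its `I`-block is a weighted graph
Laplacian. Its `J`-block is this congruent matrix, extended to the boundary by continuity, plus a
diagonal matrix that is nonnegative because `φ j + ∑ i, θ j i * x i = ∑ i, (φ j + θ j i) * x i` on
the simplex.
-/

section QuadraticForms

lemma exists_quadraticForm_eq_prod {R σ : Type*} [CommRing R] (ℓ : Module.Dual R (σ → R))
    {s : Multiset σ} (hs : s.card ≤ 2) :
    ∃ q : QuadraticForm R (σ → R), ∀ x, ℓ x = 1 → (s.map x).prod = q x := by
  have hcard : s.card = 0 ∨ s.card = 1 ∨ s.card = 2 := by omega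
  rcases hcard with h | h | h
  · obtain rfl := Multiset.card_eq_zero.1 h
    exact ⟨.linMulLin ℓ ℓ, fun x hx => by simp [hx]⟩
  · obtain ⟨a, rfl⟩ := Multiset.card_eq_one.1 h
    exact ⟨.linMulLin (.proj a) ℓ, fun x hx => by simp [hx]⟩
  · obtain ⟨a, b, rfl⟩ := Multiset.card_eq_two.1 h
    exact ⟨.linMulLin (.proj a) (.proj b), fun x _ => by simp⟩

lemma exists_quadraticForm_eq_eval {R σ : Type*} [CommRing R] (ℓ : Module.Dual R (σ → R))
    {P : MvPolynomial σ R} (hP : P.totalDegree ≤ 2) :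
    ∃ q : QuadraticForm R (σ → R), ∀ x, ℓ x = 1 → eval x P = q x := by
  have hmonomial (s : P.support) : ∃ q : QuadraticForm R (σ → R), ∀ x, ℓ x = 1 →
      (s.1.toMultiset.map x).prod = q x :=
    exists_quadraticForm_eq_prod ℓ <| by
      rw [Finsupp.card_toMultiset]
      exact (le_totalDegree s.2).trans hP
  choose q hq using hmonomial
  refine ⟨∑ s : P.support, P.coeff s.1 • q s, fun x hx => ?_⟩
  rw [_root_.sum_apply, eval_eq, ← Finset.sum_coe_sort]
  refine Finset.sum_congr rfl fun s _ => ?_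
  rw [_root_.smul_apply, ← hq s x hx, Finsupp.toMultiset_map, Finsupp.prod_toMultiset,
    Finsupp.prod_mapDomain_index (by simp) (by simp [pow_add]), smul_eq_mul, Finsupp.prod]

section Divisibility

variable {R σ : Type*} [CommRing R] [Preorder R] [DecidableEq σ]
  {q : QuadraticForm R (σ → R)} {j k : σ} {x : σ → R}

lemma quadraticForm_eq_mul_of_eq_zero_on_facet [Fintype σ]
    (hj : ∀ y, 0 ≤ y → y j = 0 → q y = 0) (hx : 0 ≤ x) :
    q x = x j * (q (Pi.single j 1) * x j +
      ∑ a ∈ univ.erase j, QuadraticMap.polar q (Pi.single j 1) (Pi.single a 1) * x a) := by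
  set y : σ → R := ∑ a ∈ univ.erase j, x a • Pi.single a 1 with hy
  have hxy : x = x j • Pi.single j 1 + y := by
    rw [hy, Finset.add_sum_erase _ (fun a => x a • (Pi.single a 1 : σ → R)) (mem_univ j)]
    exact pi_eq_sum_univ' x
  have hy_apply (b : σ) : y b = if b = j then 0 else x b := by
    simp only [hy, Finset.sum_apply, Pi.smul_apply, Pi.single_apply, smul_eq_mul, mul_ite, mul_one,
      mul_zero, Finset.sum_ite_eq, mem_erase, mem_univ, and_true, ite_not]
  have hqy : q y = 0 := by
    refine hj y (fun b => ?_) (by simp [hy_apply])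
    rw [hy_apply]
    split_ifs
    exacts [le_rfl, hx b]
  have hpolar : QuadraticMap.polar q (Pi.single j 1) y =
      ∑ a ∈ univ.erase j, QuadraticMap.polar q (Pi.single j 1) (Pi.single a 1) * x a := by
    rw [hy, ← QuadraticMap.polarBilin_apply_apply, map_sum]
    exact Finset.sum_congr rfl fun a _ => by simp [mul_comm]
  conv_lhs => rw [hxy]
  rw [QuadraticMap.map_add q, QuadraticMap.map_smul, QuadraticMap.polar_smul_left, hqy, hpolar,
    smul_eq_mul, smul_eq_mul]
  ring

lemma quadraticForm_eq_mul_mul_of_eq_zero_on_facets [Finite σ] [ZeroLEOneClass R]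
    [AddLeftMono R] (hjk : j ≠ k) (hj : ∀ y, 0 ≤ y → y j = 0 → q y = 0)
    (hk : ∀ y, 0 ≤ y → y k = 0 → q y = 0) (hx : 0 ≤ x) :
    q x = q (Pi.single j 1 + Pi.single k 1) * x j * x k := by
  cases nonempty_fintype σ
  have single_nonneg (a : σ) : (0 : σ → R) ≤ Pi.single a 1 := Pi.single_nonneg.2 zero_le_one
  have hqj : q (Pi.single j 1) = 0 := hk _ (single_nonneg j) (by simp [hjk])
  have hpolar (a : σ) (ha : a ≠ j) : QuadraticMap.polar q (Pi.single j 1) (Pi.single a 1) =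
      q (Pi.single j 1 + Pi.single a 1) := by
    rw [QuadraticMap.polar, hqj, hj _ (single_nonneg a) (by simp [ha]), sub_zero, sub_zero]
  rw [quadraticForm_eq_mul_of_eq_zero_on_facet hj hx, hqj, Finset.sum_eq_single k,
    hpolar k hjk.symm]
  · ring
  · intro a ha hak
    rw [hpolar a (ne_of_mem_erase ha), hk (Pi.single j 1 + Pi.single a 1)
      (fun b => add_nonneg (single_nonneg j b) (single_nonneg a b)) (by simp [hjk.symm, hak]),
      zero_mul]
  · simp [hjk.symm]

end Divisibility

lemma nonneg_zero_of_forall_pos_nonneg {f : ℝ → ℝ} (hf : Continuous f)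
    (h : ∀ ε, 0 < ε → 0 ≤ f ε) : 0 ≤ f 0 :=
  ge_of_tendsto ((hf.tendsto 0).mono_left (nhdsWithin_le_nhds (s := Set.Ioi 0)))
    (Filter.eventually_of_mem self_mem_nhdsWithin h)

lemma quadraticForm_nonneg_of_forall_pos {V : Type*} [AddCommGroup V] [Module ℝ V]
    {q : QuadraticForm ℝ V} {u v : V} (h : ∀ ε : ℝ, 0 < ε → 0 ≤ q (v + ε • u)) : 0 ≤ q v := by
  have hexpand (ε : ℝ) :
      q (v + ε • u) = q v + ε * ε * q u + ε * QuadraticMap.polar q v u := by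
    rw [QuadraticMap.map_add q, QuadraticMap.map_smul, QuadraticMap.polar_smul_right,
      smul_eq_mul, smul_eq_mul]
  have hcont : Continuous fun ε : ℝ => q (v + ε • u) := by
    simp only [hexpand]
    fun_prop
  simpa using nonneg_zero_of_forall_pos_nonneg hcont h

end QuadraticForms

section PosSemidef

open scoped ComplexOrder in
lemma posSemidef_apply_eq_zero_of_diag_eq_zero {𝕜 n : Type*} [RCLike 𝕜] [Finite n]
    {A : Matrix n n 𝕜} (hA : A.PosSemidef) {i : n} (hi : A i i = 0) (k : n) : A k i = 0 := by
  classical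
  cases nonempty_fintype n
  have hcol := (hA.dotProduct_mulVec_zero_iff (Pi.single i 1)).1 (by simpa using hi)
  simpa using congrFun hcol k

lemma posSemidef_fromBlocks_zero {m n : Type*} [Finite m] [Finite n] {A : Matrix m m ℝ}
    {B : Matrix n n ℝ} (hA : A.PosSemidef) (hB : B.PosSemidef) :
    (fromBlocks A 0 0 B).PosSemidef := by
  cases nonempty_fintype m
  cases nonempty_fintype n
  refine .of_dotProduct_mulVec_nonneg (hA.isHermitian.fromBlocks (by simp) hB.isHermitian)
    fun v => ?_
  have hsplit : star v ⬝ᵥ fromBlocks A 0 0 B *ᵥ v =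
      star (v ∘ Sum.inl) ⬝ᵥ A *ᵥ (v ∘ Sum.inl) + star (v ∘ Sum.inr) ⬝ᵥ B *ᵥ (v ∘ Sum.inr) := by
    rw [fromBlocks_mulVec, zero_mulVec, zero_mulVec, add_zero, zero_add, dotProduct,
      Fintype.sum_sum_type]
    rfl
  rw [hsplit]
  exact add_nonneg (hA.dotProduct_mulVec_nonneg _) (hB.dotProduct_mulVec_nonneg _)

-- For such a matrix, `2 vᵀ M v = ∑ i j, -M i j * (v i - v j) ^ 2`.
lemma posSemidef_of_sum_row_eq_zero {ι : Type*} [Fintype ι] {M : Matrix ι ι ℝ} (hM : M.IsSymm)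
    (hrow : ∀ i, ∑ j, M i j = 0) (hoff : ∀ i j, i ≠ j → M i j ≤ 0) : M.PosSemidef := by
  refine .of_dotProduct_mulVec_nonneg hM fun v => ?_
  have hleft : ∑ i, ∑ j, v i ^ 2 * M i j = 0 := by simp [← Finset.mul_sum, hrow]
  have hright : ∑ i, ∑ j, v j ^ 2 * M i j = 0 := by
    rw [Finset.sum_comm, ← hleft]
    exact Finset.sum_congr rfl fun i _ => Finset.sum_congr rfl fun j _ => by rw [hM.apply]
  have hnonneg : 0 ≤ ∑ i, ∑ j, -(M i j) * (v i - v j) ^ 2 := by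
    refine Finset.sum_nonneg fun i _ => Finset.sum_nonneg fun j _ => ?_
    rcases eq_or_ne i j with rfl | hij
    · simp
    · exact mul_nonneg (neg_nonneg.2 (hoff i j hij)) (sq_nonneg _)
  have hexpand : ∑ i, ∑ j, -(M i j) * (v i - v j) ^ 2 =
      2 * (star v ⬝ᵥ M *ᵥ v) - ∑ i, ∑ j, v i ^ 2 * M i j - ∑ i, ∑ j, v j ^ 2 * M i j := by
    simp only [star_trivial, dotProduct, mulVec, Finset.mul_sum, ← Finset.sum_sub_distrib]
    exact Finset.sum_congr rfl fun i _ => Finset.sum_congr rfl fun j _ => by ring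
  linarith

end PosSemidef

section OrthantMatrix

variable {κ : Type*} [Fintype κ] [DecidableEq κ]

/-- The matrix `Diag(y) α Diag(y) + Diag(y) Diag(Πᵀ y)`, where `π j` is the `j`-th column of `Π`:
the general form of a symmetric matrix with quadratic entries that is tangential to the orthant.
It extends `Diag(y) (α + Diag(Πᵀ y) Diag(y)⁻¹) Diag(y)` to the boundary of the orthant. -/
def orthantMatrix (α : Matrix κ κ ℝ) (π : κ → κ → ℝ) (y : κ → ℝ) : Matrix κ κ ℝ :=
  diagonal y * α * diagonal y + diagonal fun j => y j * ∑ k, π j k * y k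

variable {α : Matrix κ κ ℝ} {π : κ → κ → ℝ} {y : κ → ℝ}

lemma orthantMatrix_apply_self (j : κ) :
    orthantMatrix α π y j j = α j j * y j ^ 2 + y j * ∑ k, π j k * y k := by
  rw [orthantMatrix, Matrix.add_apply, mul_diagonal, diagonal_mul, diagonal_apply_eq]
  ring

lemma orthantMatrix_apply_ne {j k : κ} (hjk : j ≠ k) :
    orthantMatrix α π y j k = α j k * y j * y k := by
  rw [orthantMatrix, Matrix.add_apply, mul_diagonal, diagonal_mul, diagonal_apply_ne _ hjk]
  ring

lemma submatrix_orthantMatrix_inr {ι : Type*} [Fintype ι] [DecidableEq ι]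
    (A : Matrix (ι ⊕ κ) (ι ⊕ κ) ℝ) (B : ι ⊕ κ → ι ⊕ κ → ℝ) :
    (orthantMatrix A B (Sum.elim 0 y)).submatrix Sum.inr Sum.inr =
      orthantMatrix A.toBlocks₂₂ (fun j k => B (Sum.inr j) (Sum.inr k)) y := by
  ext j k
  rw [submatrix_apply]
  rcases eq_or_ne j k with rfl | hjk
  · rw [orthantMatrix_apply_self, orthantMatrix_apply_self, Fintype.sum_sum_type]
    simp only [toBlocks₂₂, of_apply, Sum.elim_inl, Sum.elim_inr, Pi.zero_apply, mul_zero,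
      Finset.sum_const_zero, zero_add]
  · rw [orthantMatrix_apply_ne (by simpa using hjk), orthantMatrix_apply_ne hjk]
    simp only [toBlocks₂₂, of_apply, Sum.elim_inr]

lemma posSemidef_orthantMatrix_iff (hy : ∀ k, 0 < y k) :
    (orthantMatrix α π y).PosSemidef ↔
      (α + diagonal fun j => (∑ k, π j k * y k) / y j).PosSemidef := by
  have hunit : IsUnit (diagonal y) :=
    isUnit_diagonal.2 (Pi.isUnit_iff.2 fun k => (hy k).ne'.isUnit)
  have hconj : orthantMatrix α π y =
      star (diagonal y) * (α + diagonal fun j => (∑ k, π j k * y k) / y j) * diagonal y := by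
    rw [star_eq_conjTranspose, diagonal_conjTranspose, star_trivial, mul_add, add_mul,
      diagonal_mul_diagonal, diagonal_mul_diagonal, orthantMatrix]
    congr 2
    ext j
    have := (hy j).ne'
    field_simp
  rw [hconj, hunit.posSemidef_star_left_conjugate_iff]

lemma posSemidef_orthantMatrix_of_forall_pos
    (h : ∀ z : κ → ℝ, (∀ k, 0 < z k) → (orthantMatrix α π z).PosSemidef) (hy : 0 ≤ y)
    (hα : α.IsSymm) : (orthantMatrix α π y).PosSemidef := by
  refine .of_dotProduct_mulVec_nonneg ?_ fun v => ?_
  · simp [orthantMatrix, IsHermitian, hα.eq, mul_assoc]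
  have hcont : Continuous fun ε : ℝ => star v ⬝ᵥ orthantMatrix α π (fun k => y k + ε) *ᵥ v := by
    unfold orthantMatrix
    fun_prop
  simpa using nonneg_zero_of_forall_pos_nonneg hcont fun ε hε =>
    (h _ fun k => add_pos_of_nonneg_of_pos (hy k) hε).dotProduct_mulVec_nonneg v

end OrthantMatrix

section Orthant

variable {σ : Type*} {q : σ → σ → QuadraticForm ℝ (σ → ℝ)}

/-- The matrix field with quadratic entries `q k l` is positive semidefinite on the orthant
`{x | 0 ≤ x}` and tangential to its facets `{x | x j = 0}`. -/
structure IsTangentialOnOrthant (q : σ → σ → QuadraticForm ℝ (σ → ℝ)) : Prop where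
  posSemidef : ∀ x, 0 ≤ x → (Matrix.of fun k l => q k l x).PosSemidef
  apply_eq_zero : ∀ x, 0 ≤ x → ∀ j, x j = 0 → ∀ k, q k j x = 0

lemma IsTangentialOnOrthant.apply_comm (h : IsTangentialOnOrthant q) {x : σ → ℝ} (hx : 0 ≤ x)
    (k l : σ) : q k l x = q l k x :=
  ((h.posSemidef x hx).isHermitian.apply k l).symm

variable [DecidableEq σ]

/-- The coefficient of `x k * x l` in the entry `q k l` of a matrix field that is tangential on
the orthant; off the diagonal it is read off at the point `e_k + e_l`. -/
def entryCoeff (q : σ → σ → QuadraticForm ℝ (σ → ℝ)) : Matrix σ σ ℝ :=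
  Matrix.of fun k l =>
    if k = l then q k k (Pi.single k 1) else q k l (Pi.single k 1 + Pi.single l 1)

/-- The coefficient of `x k * x a`, `a ≠ k`, in the diagonal entry `q k k`; by convention zero for
`a = k`. -/
def crossCoeff (q : σ → σ → QuadraticForm ℝ (σ → ℝ)) (k a : σ) : ℝ :=
  if a = k then 0 else QuadraticMap.polar (q k k) (Pi.single k 1) (Pi.single a 1)

namespace IsTangentialOnOrthant

variable {k l : σ} {x : σ → ℝ}

lemma apply_self [Fintype σ] (h : IsTangentialOnOrthant q) (hx : 0 ≤ x) :
    q k k x = x k * (entryCoeff q k k * x k + ∑ a, crossCoeff q k a * x a) := by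
  rw [quadraticForm_eq_mul_of_eq_zero_on_facet
    (fun y hy hyk => h.apply_eq_zero y hy k hyk k) hx, entryCoeff, Matrix.of_apply, if_pos rfl,
    ← Finset.filter_ne', Finset.sum_filter]
  simp only [crossCoeff, ite_mul, zero_mul, ite_not]

lemma apply_of_ne [Finite σ] (h : IsTangentialOnOrthant q) (hkl : k ≠ l) (hx : 0 ≤ x) :
    q k l x = entryCoeff q k l * x k * x l := by
  rw [entryCoeff, Matrix.of_apply, if_neg hkl]
  refine quadraticForm_eq_mul_mul_of_eq_zero_on_facets hkl (fun y hy hyk => ?_)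
    (fun y hy hyl => ?_) hx
  · rw [h.apply_comm hy k l, h.apply_eq_zero y hy k hyk]
  · exact h.apply_eq_zero y hy l hyl k

lemma of_eq_orthantMatrix [Fintype σ] (h : IsTangentialOnOrthant q) (hx : 0 ≤ x) :
    (Matrix.of fun k l => q k l x) = orthantMatrix (entryCoeff q) (crossCoeff q) x := by
  ext k l
  rw [of_apply]
  rcases eq_or_ne k l with rfl | hkl
  · rw [h.apply_self hx, orthantMatrix_apply_self]
    ring
  · rw [h.apply_of_ne hkl hx, orthantMatrix_apply_ne hkl]

lemma entryCoeff_isSymm (h : IsTangentialOnOrthant q) : (entryCoeff q).IsSymm := by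
  ext k l
  rcases eq_or_ne k l with rfl | hkl
  · rfl
  · have hnonneg : (0 : σ → ℝ) ≤ Pi.single l 1 + Pi.single k 1 :=
      add_nonneg (Pi.single_nonneg.2 zero_le_one) (Pi.single_nonneg.2 zero_le_one)
    simp only [entryCoeff, transpose_apply, of_apply, if_neg hkl, if_neg hkl.symm]
    rw [h.apply_comm hnonneg l k, add_comm]

lemma crossCoeff_nonneg (h : IsTangentialOnOrthant q) (k a : σ) : 0 ≤ crossCoeff q k a := by
  rw [crossCoeff]
  split_ifs with hak
  · rfl
  have hpoint (ε : ℝ) (hε : 0 < ε) : (0 : σ → ℝ) ≤ Pi.single a 1 + ε • Pi.single k 1 :=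
    add_nonneg (Pi.single_nonneg.2 zero_le_one)
      (smul_nonneg hε.le (Pi.single_nonneg.2 zero_le_one))
  have hqa : q k k (Pi.single a 1) = 0 :=
    h.apply_eq_zero _ (Pi.single_nonneg.2 zero_le_one) k (by simp [Ne.symm hak]) k
  have hdiag (ε : ℝ) (hε : 0 < ε) : 0 ≤ ε * q k k (Pi.single k 1) +
      QuadraticMap.polar (q k k) (Pi.single k 1) (Pi.single a 1) := by
    have hpos : 0 ≤ q k k (Pi.single a 1 + ε • Pi.single k 1) :=
      (h.posSemidef _ (hpoint ε hε)).diag_nonneg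
    rw [QuadraticMap.map_add (q k k), QuadraticMap.map_smul, QuadraticMap.polar_smul_right,
      QuadraticMap.polar_comm, hqa, zero_add, smul_eq_mul, smul_eq_mul, mul_assoc,
      ← mul_add] at hpos
    exact nonneg_of_mul_nonneg_right hpos hε
  simpa using nonneg_zero_of_forall_pos_nonneg (by fun_prop) hdiag

end IsTangentialOnOrthant

end Orthant

section SimplexOrthant

variable {ι κ : Type*} [Fintype ι]

/-- The state space `Δ^ι × ℝ₊^κ`. -/
def simplexOrthant (ι κ : Type*) [Fintype ι] : Set (ι ⊕ κ → ℝ) :=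
  {x | 0 ≤ x ∧ ∑ i, x (Sum.inl i) = 1}

lemma simplexOrthant_eq_setOf_le_one : simplexOrthant ι κ =
    {x | (∀ k, 0 ≤ x k) ∧ (∀ i : ι, x (Sum.inl i) ≤ 1) ∧ ∑ i : ι, x (Sum.inl i) = 1} := by
  ext x
  refine ⟨fun ⟨hx, hsum⟩ => ⟨hx, fun i => ?_, hsum⟩, fun ⟨hx, _, hsum⟩ => ⟨hx, hsum⟩⟩
  rw [← hsum]
  exact Finset.single_le_sum (fun k _ => hx (Sum.inl k)) (mem_univ i)

lemma add_sum_mul_nonneg_of_mem_simplexOrthant {b : ℝ} {a : ι → ℝ} (hab : ∀ i, -a i ≤ b)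
    {x : ι ⊕ κ → ℝ} (hx : x ∈ simplexOrthant ι κ) : 0 ≤ b + ∑ i, a i * x (Sum.inl i) := by
  have hb : b = ∑ i : ι, b * x (Sum.inl i) := by rw [← Finset.mul_sum, hx.2, mul_one]
  rw [hb, ← Finset.sum_add_distrib]
  refine Finset.sum_nonneg fun i _ => ?_
  rw [← add_mul]
  exact mul_nonneg (by linarith [hab i]) (hx.1 _)

lemma exists_quadraticForm_eq_of_polynomial {c : (ι ⊕ κ → ℝ) → Matrix (ι ⊕ κ) (ι ⊕ κ) ℝ}
    (hpoly : ∃ P : ι ⊕ κ → ι ⊕ κ → MvPolynomial (ι ⊕ κ) ℝ, (∀ k l, (P k l).totalDegree ≤ 2) ∧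
      ∀ x ∈ simplexOrthant ι κ, ∀ k l, c x k l = eval x (P k l)) :
    ∃ q : ι ⊕ κ → ι ⊕ κ → QuadraticForm ℝ (ι ⊕ κ → ℝ),
      ∀ x ∈ simplexOrthant ι κ, ∀ k l, c x k l = q k l x := by
  obtain ⟨P, hdeg, hP⟩ := hpoly
  choose q hq using fun k l =>
    exists_quadraticForm_eq_eval (∑ i : ι, LinearMap.proj (Sum.inl i)) (hdeg k l)
  refine ⟨q, fun x hx k l => ?_⟩
  rw [hP x hx, hq k l x (by simpa using hx.2)]

section Homogenization

variable [DecidableEq ι] [DecidableEq κ] {q : QuadraticForm ℝ (ι ⊕ κ → ℝ)}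
  {S : Submodule ℝ (ι ⊕ κ → ℝ)} {i : ι} {x : ι ⊕ κ → ℝ}

lemma quadraticForm_nonneg_of_nonneg_on_simplexOrthant
    (hi : Pi.single (Sum.inl i) 1 ∈ S) (h : ∀ y ∈ simplexOrthant ι κ, y ∈ S → 0 ≤ q y)
    (hx : 0 ≤ x) (hxS : x ∈ S) : 0 ≤ q x := by
  have hcone (y : ι ⊕ κ → ℝ) (hy : 0 ≤ y) (hyS : y ∈ S) (hpos : 0 < ∑ j, y (Sum.inl j)) :
      0 ≤ q y := by
    set r := ∑ j, y (Sum.inl j) with hr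
    have hmem : r⁻¹ • y ∈ simplexOrthant ι κ := by
      refine ⟨smul_nonneg (inv_nonneg.2 hpos.le) hy, ?_⟩
      simp only [Pi.smul_apply, smul_eq_mul, ← Finset.mul_sum, ← hr]
      exact inv_mul_cancel₀ hpos.ne'
    have hscaled := h _ hmem (S.smul_mem _ hyS)
    rw [QuadraticMap.map_smul, smul_eq_mul] at hscaled
    exact nonneg_of_mul_nonneg_right hscaled (by positivity)
  refine quadraticForm_nonneg_of_forall_pos (u := Pi.single (Sum.inl i) 1) fun ε hε => ?_
  refine hcone _ (add_nonneg hx (smul_nonneg hε.le (Pi.single_nonneg.2 zero_le_one)))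
    (S.add_mem hxS (S.smul_mem ε hi)) ?_
  have hsum : ∑ j, (x + ε • Pi.single (Sum.inl i) 1 : ι ⊕ κ → ℝ) (Sum.inl j) =
      ∑ j, x (Sum.inl j) + ε := by
    simp [Finset.sum_add_distrib, Pi.single_apply]
  rw [hsum]
  exact add_pos_of_nonneg_of_pos (Finset.sum_nonneg fun j _ => hx (Sum.inl j)) hε

lemma quadraticForm_eq_zero_of_eq_zero_on_simplexOrthant
    (hi : Pi.single (Sum.inl i) 1 ∈ S) (h : ∀ y ∈ simplexOrthant ι κ, y ∈ S → q y = 0)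
    (hx : 0 ≤ x) (hxS : x ∈ S) : q x = 0 := by
  have hneg : 0 ≤ (-q) x := quadraticForm_nonneg_of_nonneg_on_simplexOrthant hi
    (fun y hy hyS => by simp [h y hy hyS]) hx hxS
  exact le_antisymm (neg_nonneg.1 hneg) <| quadraticForm_nonneg_of_nonneg_on_simplexOrthant hi
    (fun y hy hyS => (h y hy hyS).ge) hx hxS

end Homogenization

section Diffusion

variable [Fintype κ] [DecidableEq ι] [DecidableEq κ]

/-- Condition (i): on `Δ^ι × ℝ₊^κ` the matrix `c` is positive semidefinite, tangential to the
facets, and annihilates the normal direction of the simplex. -/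
def IsAdmissibleDiffusion (c : (ι ⊕ κ → ℝ) → Matrix (ι ⊕ κ) (ι ⊕ κ) ℝ) : Prop :=
  (∀ x ∈ simplexOrthant ι κ, (c x).PosSemidef) ∧
  (∀ j, ∀ x ∈ simplexOrthant ι κ, x j = 0 → c x *ᵥ Pi.single j 1 = 0) ∧
  (∀ i : ι, ∀ x ∈ simplexOrthant ι κ, ∑ j : ι, c x (Sum.inl i) (Sum.inl j) = 0)

namespace IsAdmissibleDiffusion

variable {c : (ι ⊕ κ → ℝ) → Matrix (ι ⊕ κ) (ι ⊕ κ) ℝ}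
  {q : ι ⊕ κ → ι ⊕ κ → QuadraticForm ℝ (ι ⊕ κ → ℝ)} {x : ι ⊕ κ → ℝ}

lemma posSemidef_quadraticForm [Nonempty ι] (hc : IsAdmissibleDiffusion c)
    (hq : ∀ x ∈ simplexOrthant ι κ, ∀ k l, c x k l = q k l x) (hx : 0 ≤ x) :
    (Matrix.of fun k l => q k l x).PosSemidef := by
  obtain ⟨i⟩ := ‹Nonempty ι›
  refine .of_dotProduct_mulVec_nonneg ?_ fun v => ?_
  · ext k l
    refine sub_eq_zero.1 (quadraticForm_eq_zero_of_eq_zero_on_simplexOrthant (q := q l k - q k l)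
      (S := ⊤) (i := i) trivial (fun y hy _ => ?_) hx trivial)
    rw [_root_.sub_apply, ← hq y hy, ← hq y hy, sub_eq_zero]
    exact (hc.1 y hy).isHermitian.apply k l
  · have heval (y : ι ⊕ κ → ℝ) : (∑ k, ∑ l, (v k * v l) • q k l) y =
        star v ⬝ᵥ (Matrix.of fun k l => q k l y) *ᵥ v := by
      simp only [_root_.sum_apply, _root_.smul_apply, smul_eq_mul, dotProduct, mulVec, of_apply,
        star_trivial, Finset.mul_sum]
      exact Finset.sum_congr rfl fun k _ => Finset.sum_congr rfl fun l _ => by ring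
    rw [← heval]
    refine quadraticForm_nonneg_of_nonneg_on_simplexOrthant (S := ⊤) (i := i) trivial
      (fun y hy _ => ?_) hx trivial
    have hcy : c y = Matrix.of fun k l => q k l y := Matrix.ext (hq y hy)
    rw [heval, ← hcy]
    exact (hc.1 y hy).dotProduct_mulVec_nonneg v

lemma sum_row_quadraticForm (hc : IsAdmissibleDiffusion c)
    (hq : ∀ x ∈ simplexOrthant ι κ, ∀ k l, c x k l = q k l x) (hx : 0 ≤ x) (i : ι) :
    ∑ j : ι, q (Sum.inl i) (Sum.inl j) x = 0 := by
  rw [← _root_.sum_apply]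
  refine quadraticForm_eq_zero_of_eq_zero_on_simplexOrthant (S := ⊤) (i := i) trivial
    (fun y hy _ => ?_) hx trivial
  rw [_root_.sum_apply, ← hc.2.2 i y hy]
  exact Finset.sum_congr rfl fun j _ => (hq y hy _ _).symm

lemma isTangentialOnOrthant [Nonempty ι] (hc : IsAdmissibleDiffusion c)
    (hq : ∀ x ∈ simplexOrthant ι κ, ∀ k l, c x k l = q k l x) : IsTangentialOnOrthant q := by
  refine ⟨fun x hx => hc.posSemidef_quadraticForm hq hx, fun x hx j hxj k => ?_⟩
  by_cases hj : ∃ i : ι, Sum.inl i ≠ j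
  · obtain ⟨i, hi⟩ := hj
    refine quadraticForm_eq_zero_of_eq_zero_on_simplexOrthant (i := i)
      (S := LinearMap.ker (LinearMap.proj j)) (by simp [hi.symm]) (fun y hy hyj => ?_) hx hxj
    rw [← hq y hy]
    simpa using congrFun (hc.2.1 j y hy hyj) k
  -- A zero-dimensional simplex has no facet `x j = 0`, but there the row sum is `q j j` itself.
  · push Not at hj
    obtain ⟨i⟩ := ‹Nonempty ι›
    obtain rfl := hj i
    have hdiag : q (Sum.inl i) (Sum.inl i) x = 0 := by
      rw [← hc.sum_row_quadraticForm hq hx i]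
      exact (Fintype.sum_eq_single (f := fun k => q (Sum.inl i) (Sum.inl k) x) i fun k hk =>
        absurd (Sum.inl_injective (hj k)) hk).symm
    exact posSemidef_apply_eq_zero_of_diag_eq_zero (hc.posSemidef_quadraticForm hq hx) hdiag k

end IsAdmissibleDiffusion

/-- The constraints of condition (ii) on the parameters; `π j` is the `j`-th column of `Π`. -/
def IsAdmissibleParameters (γ : ι → ι → ℝ) (θ : κ → ι → ℝ) (π : κ → κ → ℝ) (φ : κ → ℝ)
    (α : Matrix κ κ ℝ) : Prop :=
  (∀ i j, γ i j = γ j i) ∧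
  (∀ i j, i ≠ j → 0 ≤ γ i j) ∧
  (∀ j k, 0 ≤ π j k) ∧ (∀ j, π j j = 0) ∧
  (∀ j i, max (-(θ j i)) 0 ≤ φ j) ∧
  α.IsSymm ∧
  (∀ y : κ → ℝ, (∀ k, 0 < y k) →
    (α + diagonal fun j => (∑ k, π j k * y k) / y j).PosSemidef)

/-- The matrix `M` is the value at `x` of the diffusion matrix that condition (ii) assigns to the
given parameters. -/
def HasDiffusionForm (γ : ι → ι → ℝ) (θ : κ → ι → ℝ) (π : κ → κ → ℝ) (φ : κ → ℝ)
    (α : Matrix κ κ ℝ) (x : ι ⊕ κ → ℝ) (M : Matrix (ι ⊕ κ) (ι ⊕ κ) ℝ) : Prop :=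
  (∀ i, M (Sum.inl i) (Sum.inl i) =
    ∑ j ∈ univ.erase i, γ i j * x (Sum.inl i) * x (Sum.inl j)) ∧
  (∀ i j, i ≠ j → M (Sum.inl i) (Sum.inl j) = -(γ i j * x (Sum.inl i) * x (Sum.inl j))) ∧
  (∀ i j, M (Sum.inl i) (Sum.inr j) = 0) ∧
  (∀ j, M (Sum.inr j) (Sum.inr j) = α j j * x (Sum.inr j) ^ 2 +
    x (Sum.inr j) * (φ j + (∑ i, θ j i * x (Sum.inl i)) + ∑ k, π j k * x (Sum.inr k))) ∧
  (∀ j k, j ≠ k → M (Sum.inr j) (Sum.inr k) = α j k * x (Sum.inr j) * x (Sum.inr k))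

end Diffusion

namespace IsTangentialOnOrthant

section SimplexBlock

variable [Finite κ] [DecidableEq ι] [DecidableEq κ]
  {q : ι ⊕ κ → ι ⊕ κ → QuadraticForm ℝ (ι ⊕ κ → ℝ)}

lemma apply_inl_inl_self (h : IsTangentialOnOrthant q)
    (hrow : ∀ i x, 0 ≤ x → ∑ j : ι, q (Sum.inl i) (Sum.inl j) x = 0) {x : ι ⊕ κ → ℝ} (hx : 0 ≤ x)
    (i : ι) : q (Sum.inl i) (Sum.inl i) x =
      ∑ j ∈ univ.erase i,
        -entryCoeff q (Sum.inl i) (Sum.inl j) * x (Sum.inl i) * x (Sum.inl j) := by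
  have hsum := hrow i x hx
  rw [← Finset.add_sum_erase _ _ (mem_univ i)] at hsum
  rw [eq_neg_of_add_eq_zero_left hsum, ← Finset.sum_neg_distrib]
  refine Finset.sum_congr rfl fun j hj => ?_
  rw [h.apply_of_ne (by simpa using (ne_of_mem_erase hj).symm) hx]
  ring

lemma entryCoeff_inl_inl_nonpos (h : IsTangentialOnOrthant q)
    (hrow : ∀ i x, 0 ≤ x → ∑ j : ι, q (Sum.inl i) (Sum.inl j) x = 0) {i j : ι} (hij : i ≠ j) :
    entryCoeff q (Sum.inl i) (Sum.inl j) ≤ 0 := by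
  let x : ι ⊕ κ → ℝ := Pi.single (Sum.inl i) 1 + Pi.single (Sum.inl j) 1
  have hx : 0 ≤ x := add_nonneg (Pi.single_nonneg.2 zero_le_one) (Pi.single_nonneg.2 zero_le_one)
  have hdiag : q (Sum.inl i) (Sum.inl i) x = -entryCoeff q (Sum.inl i) (Sum.inl j) := by
    rw [h.apply_inl_inl_self hrow hx, Finset.sum_eq_single j]
    · simp [x, hij, hij.symm]
    · intro k hk hkj
      simp [x, ne_of_mem_erase hk, hkj]
    · simp [hij.symm]
  rw [← neg_nonneg, ← hdiag]
  exact (h.posSemidef x hx).diag_nonneg (i := Sum.inl i)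

lemma entryCoeff_inl_inr (h : IsTangentialOnOrthant q)
    (hrow : ∀ i x, 0 ≤ x → ∑ j : ι, q (Sum.inl i) (Sum.inl j) x = 0) (i : ι) (j : κ) :
    entryCoeff q (Sum.inl i) (Sum.inr j) = 0 := by
  let x : ι ⊕ κ → ℝ := Pi.single (Sum.inl i) 1 + Pi.single (Sum.inr j) 1
  have hx : 0 ≤ x := add_nonneg (Pi.single_nonneg.2 zero_le_one) (Pi.single_nonneg.2 zero_le_one)
  have hdiag : q (Sum.inl i) (Sum.inl i) x = 0 := by
    rw [h.apply_inl_inl_self hrow hx]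
    refine Finset.sum_eq_zero fun k hk => ?_
    simp [x, ne_of_mem_erase hk]
  have hoff : q (Sum.inr j) (Sum.inl i) x = 0 :=
    posSemidef_apply_eq_zero_of_diag_eq_zero (h.posSemidef x hx) hdiag (Sum.inr j)
  rw [h.apply_comm hx, h.apply_of_ne Sum.inl_ne_inr hx] at hoff
  simpa [x] using hoff

end SimplexBlock

variable [Fintype κ] [DecidableEq ι] [DecidableEq κ]
  {q : ι ⊕ κ → ι ⊕ κ → QuadraticForm ℝ (ι ⊕ κ → ℝ)}

lemma isAdmissibleParameters (h : IsTangentialOnOrthant q)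
    (hrow : ∀ i x, 0 ≤ x → ∑ j : ι, q (Sum.inl i) (Sum.inl j) x = 0) :
    IsAdmissibleParameters (fun i j => -entryCoeff q (Sum.inl i) (Sum.inl j))
      (fun j i => crossCoeff q (Sum.inr j) (Sum.inl i))
      (fun j k => crossCoeff q (Sum.inr j) (Sum.inr k)) 0 (entryCoeff q).toBlocks₂₂ := by
  refine ⟨fun i j => congrArg Neg.neg (h.entryCoeff_isSymm.apply _ _),
    fun i j hij => neg_nonneg.2 (h.entryCoeff_inl_inl_nonpos hrow hij),
    fun j k => h.crossCoeff_nonneg _ _, fun j => if_pos rfl,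
    fun j i => max_le (neg_nonpos.2 (h.crossCoeff_nonneg _ _)) le_rfl,
    h.entryCoeff_isSymm.submatrix Sum.inr, fun y hy => ?_⟩
  have hx : 0 ≤ (Sum.elim 0 y : ι ⊕ κ → ℝ) :=
    fun k => Sum.rec (fun _ => le_rfl) (fun k => (hy k).le) k
  rw [← posSemidef_orthantMatrix_iff hy, ← submatrix_orthantMatrix_inr,
    ← h.of_eq_orthantMatrix hx]
  exact (h.posSemidef _ hx).submatrix Sum.inr

lemma hasDiffusionForm (h : IsTangentialOnOrthant q)
    (hrow : ∀ i x, 0 ≤ x → ∑ j : ι, q (Sum.inl i) (Sum.inl j) x = 0) {x : ι ⊕ κ → ℝ}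
    (hx : 0 ≤ x) :
    HasDiffusionForm (fun i j => -entryCoeff q (Sum.inl i) (Sum.inl j))
      (fun j i => crossCoeff q (Sum.inr j) (Sum.inl i))
      (fun j k => crossCoeff q (Sum.inr j) (Sum.inr k)) 0 (entryCoeff q).toBlocks₂₂ x
      (Matrix.of fun k l => q k l x) := by
  refine ⟨h.apply_inl_inl_self hrow hx, fun i j hij => ?_, fun i j => ?_, fun j => ?_,
    fun j k hjk => h.apply_of_ne (by simpa using hjk) hx⟩
  · rw [of_apply, h.apply_of_ne (by simpa using hij) hx]
    ring
  · rw [of_apply, h.apply_of_ne Sum.inl_ne_inr hx, h.entryCoeff_inl_inr hrow]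
    ring
  · rw [of_apply, h.apply_self hx, Fintype.sum_sum_type]
    simp only [toBlocks₂₂, of_apply, Pi.zero_apply, zero_add]
    ring

end IsTangentialOnOrthant

namespace HasDiffusionForm

variable [Fintype κ] [DecidableEq ι] {γ : ι → ι → ℝ} {θ : κ → ι → ℝ} {π : κ → κ → ℝ}
  {φ : κ → ℝ} {α : Matrix κ κ ℝ}
  {x : ι ⊕ κ → ℝ} {M : Matrix (ι ⊕ κ) (ι ⊕ κ) ℝ}

lemma sum_row_eq_zero (h : HasDiffusionForm γ θ π φ α x M) (i : ι) :
    ∑ j : ι, M (Sum.inl i) (Sum.inl j) = 0 := by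
  obtain ⟨hdiag, hoff, -⟩ := h
  rw [← Finset.add_sum_erase _ _ (mem_univ i), hdiag i, ← Finset.sum_add_distrib]
  refine Finset.sum_eq_zero fun j hj => ?_
  rw [hoff i j (ne_of_mem_erase hj).symm, add_neg_cancel]

lemma apply_eq_zero (h : HasDiffusionForm γ θ π φ α x M) (hM : M.IsSymm) {j : ι ⊕ κ}
    (hj : x j = 0) (k : ι ⊕ κ) : M k j = 0 := by
  obtain ⟨hII, hII', hIJ, hJJ, hJJ'⟩ := h
  rcases k with k | k <;> rcases j with j | j
  · rcases eq_or_ne k j with rfl | hkj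
    · simp [hII, hj]
    · simp [hII' k j hkj, hj]
  · exact hIJ k j
  · rw [hM.apply, hIJ]
  · rcases eq_or_ne k j with rfl | hkj
    · simp [hJJ, hj]
    · simp [hJJ' k j hkj, hj]

lemma posSemidef_toBlocks₁₁ (h : HasDiffusionForm γ θ π φ α x M) (hM : M.IsSymm)
    (hγ : ∀ i j, i ≠ j → 0 ≤ γ i j) (hx : 0 ≤ x) : M.toBlocks₁₁.PosSemidef := by
  refine posSemidef_of_sum_row_eq_zero (hM.submatrix Sum.inl) h.sum_row_eq_zero fun i j hij => ?_
  change M (Sum.inl i) (Sum.inl j) ≤ 0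
  rw [h.2.1 i j hij, neg_nonpos]
  exact mul_nonneg (mul_nonneg (hγ i j hij) (hx _)) (hx _)

lemma eq_fromBlocks [DecidableEq κ] (h : HasDiffusionForm γ θ π φ α x M) (hM : M.IsSymm) :
    M = fromBlocks M.toBlocks₁₁ 0 0 (orthantMatrix α π (x ∘ Sum.inr) +
      diagonal fun j => x (Sum.inr j) * (φ j + ∑ i, θ j i * x (Sum.inl i))) := by
  obtain ⟨-, -, hIJ, hJJ, hJJ'⟩ := h
  ext (k | k) (l | l)
  · rfl
  · exact hIJ k l
  · rw [hM.apply, hIJ]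
    rfl
  · rw [fromBlocks_apply₂₂, Matrix.add_apply]
    rcases eq_or_ne k l with rfl | hkl
    · rw [hJJ, orthantMatrix_apply_self, diagonal_apply_eq]
      simp only [Function.comp_apply]
      ring
    · rw [hJJ' k l hkl, orthantMatrix_apply_ne hkl, diagonal_apply_ne _ hkl, add_zero]
      rfl

lemma posSemidef [DecidableEq κ] (h : HasDiffusionForm γ θ π φ α x M) (hM : M.IsSymm)
    (hpar : IsAdmissibleParameters γ θ π φ α) (hx : x ∈ simplexOrthant ι κ) : M.PosSemidef := by
  obtain ⟨-, hγ, -, -, hφ, hα, hblock⟩ := hpar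
  have hquadratic : (orthantMatrix α π (x ∘ Sum.inr)).PosSemidef :=
    posSemidef_orthantMatrix_of_forall_pos
      (fun y hy => (posSemidef_orthantMatrix_iff hy).2 (hblock y hy)) (fun k => hx.1 _) hα
  have hlinear : (diagonal fun j =>
      x (Sum.inr j) * (φ j + ∑ i, θ j i * x (Sum.inl i))).PosSemidef :=
    .diagonal fun j => mul_nonneg (hx.1 _) <|
      add_sum_mul_nonneg_of_mem_simplexOrthant (fun i => (le_max_left _ _).trans (hφ j i)) hx
  rw [h.eq_fromBlocks hM]
  exact posSemidef_fromBlocks_zero (h.posSemidef_toBlocks₁₁ hM hγ hx.1) (hquadratic.add hlinear)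

end HasDiffusionForm

theorem statement3_general [Fintype κ] [DecidableEq ι] [DecidableEq κ] [Nonempty ι]
    {c : (ι ⊕ κ → ℝ) → Matrix (ι ⊕ κ) (ι ⊕ κ) ℝ} (hsymm : ∀ x ∈ simplexOrthant ι κ, (c x).IsSymm)
    (hpoly : ∃ P : ι ⊕ κ → ι ⊕ κ → MvPolynomial (ι ⊕ κ) ℝ, (∀ k l, (P k l).totalDegree ≤ 2) ∧
      ∀ x ∈ simplexOrthant ι κ, ∀ k l, c x k l = eval x (P k l)) :
    IsAdmissibleDiffusion c ↔ ∃ γ θ π φ α, IsAdmissibleParameters γ θ π φ α ∧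
      ∀ x ∈ simplexOrthant ι κ, HasDiffusionForm γ θ π φ α x (c x) := by
  constructor
  · intro hc
    obtain ⟨q, hq⟩ := exists_quadraticForm_eq_of_polynomial hpoly
    have htangent := hc.isTangentialOnOrthant hq
    have hrow := fun i x (hx : 0 ≤ x) => hc.sum_row_quadraticForm hq hx i
    refine ⟨_, _, _, _, _, htangent.isAdmissibleParameters hrow, fun x hx => ?_⟩
    rw [show c x = Matrix.of fun k l => q k l x from Matrix.ext (hq x hx)]
    exact htangent.hasDiffusionForm hrow hx.1
  · rintro ⟨γ, θ, π, φ, α, hpar, hform⟩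
    refine ⟨fun x hx => (hform x hx).posSemidef (hsymm x hx) hpar hx, fun j x hx hxj => ?_,
      fun i x hx => (hform x hx).sum_row_eq_zero i⟩
    ext k
    simpa using (hform x hx).apply_eq_zero (hsymm x hx) hxj k

end SimplexOrthant

/-- characterization of the admissible diffusion matrices `c` with polynomial
entries of degree at most 2 on the state space `D = Δ^d × ℝ_+^m`. Coordinates are indexed by
`Fin d ⊕ Fin m`, where `Sum.inl` gives the simplex coordinates (the index set `I`) and
`Sum.inr` the nonnegative coordinates (the index set `J`). -/
theorem statement3 (d m : ℕ) (hd : 2 ≤ d) (hm : 1 ≤ m)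
    (D : Set ((Fin d ⊕ Fin m) → ℝ))
    (hD : D = {x | (∀ k, 0 ≤ x k) ∧ (∀ i : Fin d, x (Sum.inl i) ≤ 1) ∧
        (∑ i : Fin d, x (Sum.inl i)) = 1})
    (c : ((Fin d ⊕ Fin m) → ℝ) → Matrix (Fin d ⊕ Fin m) (Fin d ⊕ Fin m) ℝ)
    (hsymm : ∀ x, (c x).IsSymm)
    (hpoly : ∃ P : (Fin d ⊕ Fin m) → (Fin d ⊕ Fin m) → MvPolynomial (Fin d ⊕ Fin m) ℝ,
        (∀ k l, (P k l).totalDegree ≤ 2) ∧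
        ∀ x k l, c x k l = MvPolynomial.eval x (P k l)) :
    -- condition (i)
    ((∀ x ∈ D, (c x).PosSemidef) ∧
     (∀ (j : Fin d ⊕ Fin m), ∀ x ∈ D, x j = 0 → (c x) *ᵥ (Pi.single j 1) = 0) ∧
     (∀ (i : Fin d), ∀ x ∈ D, (∑ j : Fin d, c x (Sum.inl i) (Sum.inl j)) = 0))
    ↔
    -- condition (ii)
    (∃ (γ : Fin d → Fin d → ℝ) (θ : Fin m → Fin d → ℝ) (π : Fin m → Fin m → ℝ)
        (φ : Fin m → ℝ) (α : Matrix (Fin m) (Fin m) ℝ),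
      (∀ i j, γ i j = γ j i) ∧
      (∀ i j, i ≠ j → 0 ≤ γ i j) ∧
      (∀ j k, 0 ≤ π j k) ∧ (∀ j, π j j = 0) ∧
      (∀ j i, max (-(θ j i)) 0 ≤ φ j) ∧
      α.IsSymm ∧
      (∀ xJ : Fin m → ℝ, (∀ k, 0 < xJ k) →
        (α + Matrix.diagonal (fun j => (∑ k, π j k * xJ k) / xJ j)).PosSemidef) ∧
      (∀ x ∈ D,
        (∀ i : Fin d,
          c x (Sum.inl i) (Sum.inl i) =
            ∑ j ∈ Finset.univ.erase i, γ i j * x (Sum.inl i) * x (Sum.inl j)) ∧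
        (∀ i j : Fin d, i ≠ j →
          c x (Sum.inl i) (Sum.inl j) = -(γ i j * x (Sum.inl i) * x (Sum.inl j))) ∧
        (∀ (i : Fin d) (j : Fin m), c x (Sum.inl i) (Sum.inr j) = 0) ∧
        (∀ j : Fin m,
          c x (Sum.inr j) (Sum.inr j) =
            α j j * (x (Sum.inr j)) ^ 2 +
              x (Sum.inr j) * (φ j + (∑ i : Fin d, θ j i * x (Sum.inl i)) +
                (∑ k : Fin m, π j k * x (Sum.inr k)))) ∧
        (∀ j k : Fin m, j ≠ k →
          c x (Sum.inr j) (Sum.inr k) = α j k * x (Sum.inr j) * x (Sum.inr k)))) := by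
  have hstate : D = simplexOrthant (Fin d) (Fin m) := hD.trans simplexOrthant_eq_setOf_le_one.symm
  have : Nonempty (Fin d) := ⟨⟨0, by omega⟩⟩
  subst hstate
  simpa only [IsAdmissibleDiffusion, IsAdmissibleParameters, HasDiffusionForm, and_assoc] using
    statement3_general (fun x _ => hsymm x) (hpoly.imp fun P hP => ⟨hP.1, fun x _ => hP.2 x⟩)
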